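/- Let G be a nontrivial additive subgroup of ℝ² such that G·A = G for every A ∈ SO(2). Then G = ℝ². -/

import Mathlib

/-!
If `g ∈ G`, adding the rotations of `g` by the angles `θ` and `-θ` gives `(2 cos θ) g ∈ G`, so `G`
contains `t g` for small real `t`, hence for every real `t` by taking integer multiples. Thus `G` is
a real subspace. It is stable under the quarter turn `J`, and `g`, `J g` span `ℝ²` when `g ≠ 0`.
-/

lemma rot_mem {G : AddSubgroup (Fin 2 → ℝ)}
    (h : ∀ A : Matrix (Fin 2) (Fin 2) ℝ, A.transpose * A = 1 → A.det = 1 →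
      (fun g => Matrix.vecMul g A) '' (G : Set (Fin 2 → ℝ)) = G)
    {g : Fin 2 → ℝ} (hg : g ∈ G) {c s : ℝ} (hcs : c ^ 2 + s ^ 2 = 1) :
    ![g 0 * c - g 1 * s, g 0 * s + g 1 * c] ∈ G := by
  have h1 := h !![c, s; -s, c]
    (by
      ext i j
      fin_cases i <;> fin_cases j <;> simp [Matrix.mul_apply, Fin.sum_univ_two] <;> linarith)
    (by rw [Matrix.det_fin_two_of]; linarith)
  have h2 : Matrix.vecMul g !![c, s; -s, c] ∈ (G : Set (Fin 2 → ℝ)) := by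
    rw [← h1]
    exact ⟨g, hg, rfl⟩
  have h3 : Matrix.vecMul g !![c, s; -s, c] = ![g 0 * c - g 1 * s, g 0 * s + g 1 * c] := by
    ext i
    fin_cases i <;> simp [Matrix.vecMul, dotProduct, Fin.sum_univ_two] <;> ring
  rwa [h3] at h2

lemma smul_mem_of_rot {G : AddSubgroup (Fin 2 → ℝ)}
    (h : ∀ A : Matrix (Fin 2) (Fin 2) ℝ, A.transpose * A = 1 → A.det = 1 →
      (fun g => Matrix.vecMul g A) '' (G : Set (Fin 2 → ℝ)) = G)
    {g : Fin 2 → ℝ} (hg : g ∈ G) (t : ℝ) : t • g ∈ G := by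
  obtain ⟨n, hn⟩ := exists_nat_gt |t|
  have hn0 : (0 : ℝ) < n := (abs_nonneg t).trans_lt hn
  -- `t / n = 2 cos θ` is solvable because `|t| < n`.
  set c : ℝ := t / n / 2 with hc
  have hc1 : c ^ 2 ≤ 1 := by
    have h1 : |t / n| ≤ 1 := by
      rw [abs_div, abs_of_pos hn0]
      exact (div_le_one hn0).2 hn.le
    have := abs_le.1 h1
    nlinarith
  have hs := Real.sq_sqrt (sub_nonneg.2 hc1)
  have m1 := rot_mem h hg (c := c) (s := √(1 - c ^ 2)) (by linarith)
  have m2 := rot_mem h hg (c := c) (s := -√(1 - c ^ 2)) (by rw [neg_sq]; linarith)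
  have m3 := G.nsmul_mem (G.add_mem m1 m2) n
  have key : (n : ℝ) * (2 * c) = t := by
    rw [hc]; field_simp
  convert m3 using 1
  ext i
  fin_cases i
  · simp
    linear_combination (-g 0) * key
  · simp
    linear_combination (-g 1) * key

theorem stmt_19 (G : AddSubgroup (Fin 2 → ℝ)) (hG : G ≠ ⊥)
    (h : ∀ A : Matrix (Fin 2) (Fin 2) ℝ, A.transpose * A = 1 → A.det = 1 →
      (fun g => Matrix.vecMul g A) '' (G : Set (Fin 2 → ℝ)) = G) :
    G = ⊤ := by
  obtain ⟨g, hg, hg0⟩ := G.bot_or_exists_ne_zero.resolve_left hG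
  have hN : g 0 ^ 2 + g 1 ^ 2 ≠ 0 := by
    intro h0
    apply hg0
    ext i
    fin_cases i
    · simp only [Fin.zero_eta, Pi.zero_apply]; nlinarith [sq_nonneg (g 0), sq_nonneg (g 1)]
    · simp only [Fin.mk_one, Pi.zero_apply]; nlinarith [sq_nonneg (g 0), sq_nonneg (g 1)]
  have hJ := rot_mem h hg (c := 0) (s := 1) (by norm_num)
  rw [eq_top_iff]
  intro v _
  -- The coefficients are those of `v` in the orthogonal basis `g`, `J g`.
  have := G.add_mem
    (smul_mem_of_rot h hg ((v 0 * g 0 + v 1 * g 1) / (g 0 ^ 2 + g 1 ^ 2)))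
    (smul_mem_of_rot h hJ ((v 1 * g 0 - v 0 * g 1) / (g 0 ^ 2 + g 1 ^ 2)))
  convert this using 1
  ext i
  fin_cases i
  · simp
    field_simp
    ring
  · simp
    field_simp
    ring
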